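/- arXiv:1203.5678 — 2 statements merged into one kernel-verified Lean document; each statement's English description precedes it below -/
import Mathlib

section
/- Let d be a partial metric on a nonempty set X whose associated metric space (X,e) is complete, let φ : [0,∞) → [0,∞) be right limit normal, and let T : X → X be (M;c;φ)-contractive, i.e., d(Tx,Ty) ≤ max{φ(M(x,y)), c(x,y)} for all x, y ∈ X. Then for each x ∈ X, with γ(x) := lim_n d(Tⁿx, Tⁿ⁺¹x), the doubly indexed sequence d(Tᵐx, Tⁿx) converges to γ(x) as m, n → ∞; in particular, the sequence (Tⁿx) is e-Cauchy. -/
open Filter Topology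

noncomputable section

/-- A partial metric on `X` (Matthews). -/
def IsPartialMetric {X : Type*} (d : X → X → ℝ) : Prop :=
  (∀ x y, 0 ≤ d x y) ∧
  (∀ x y, d x y = d y x) ∧
  (∀ x y, max (d x x) (d y y) ≤ d x y) ∧
  (∀ x y z, d x z ≤ d x y + d y z - d y y) ∧
  (∀ x y, d x y = d x x → d x y = d y y → x = y)

/-- The (standard) metric associated to a partial metric. -/
def assocE {X : Type*} (d : X → X → ℝ) (x y : X) : ℝ :=
  2 * d x y - d x x - d y y

/-- Completeness of the associated metric space `(X, e)`:
every `e`-Cauchy sequence `e`-converges to some point. -/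
def eComplete {X : Type*} (d : X → X → ℝ) : Prop :=
  ∀ u : ℕ → X,
    (∀ α : ℝ, 0 < α → ∃ p : ℕ, ∀ m n : ℕ, p ≤ m → p ≤ n → assocE d (u m) (u n) < α) →
    ∃ x : X, Tendsto (fun n => assocE d (u n) x) atTop (nhds 0)

/-- `M(x,y) = max{d(x,y), d(x,Tx), d(y,Ty), (1/2)(d(x,Ty)+d(Tx,y))}`. -/
def Mfun {X : Type*} (d : X → X → ℝ) (T : X → X) (x y : X) : ℝ :=
  max (max (d x y) (max (d x (T x)) (d y (T y)))) ((d x (T y) + d (T x) y) / 2)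

/-- A normal function `φ : [0,∞) → [0,∞)`. -/
def IsNormal (φ : ℝ → ℝ) : Prop :=
  (∀ t, 0 ≤ t → 0 ≤ φ t) ∧ φ 0 = 0 ∧ ∀ t, 0 < t → φ t < t

/-- `limsup_{t→s⁺} φ(t) = inf_{ε>0} sup {φ(t) : s ≤ t < s+ε}`. -/
def rightLimsup (φ : ℝ → ℝ) (s : ℝ) : ℝ :=
  sInf {y : ℝ | ∃ ε : ℝ, 0 < ε ∧ y = sSup (φ '' Set.Ico s (s + ε))}

/-- `limsup_{t→s} φ(t) = inf_{ε>0} sup {φ(t) : t ∈ [0,∞), s-ε < t < s+ε}`. -/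
def limsupAt (φ : ℝ → ℝ) (s : ℝ) : ℝ :=
  sInf {y : ℝ | ∃ ε : ℝ, 0 < ε ∧ y = sSup (φ '' (Set.Ioo (s - ε) (s + ε) ∩ Set.Ici 0))}

/-- A right limit normal function. -/
def IsRightLimitNormal (φ : ℝ → ℝ) : Prop :=
  IsNormal φ ∧ ∀ s : ℝ, 0 < s → rightLimsup φ s < s

/-- A limit normal function. -/
def IsLimitNormal (φ : ℝ → ℝ) : Prop :=
  IsNormal φ ∧ ∀ s : ℝ, 0 < s → limsupAt φ s < s

/-- `liminf_{t→∞} ψ(t) = sup_{α ≥ 0} inf {ψ(t) : t ≥ α}`, computed in `EReal`. -/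
def liminfAtInfty (ψ : ℝ → ℝ) : EReal :=
  ⨆ α : {a : ℝ // 0 ≤ a}, ⨅ t : {t : ℝ // (α : ℝ) ≤ t}, ((ψ t : ℝ) : EReal)

/-- `ψ` is semi-coercive: `liminf_{t→∞} ψ(t) > 0`. -/
def SemiCoercive (ψ : ℝ → ℝ) : Prop := 0 < liminfAtInfty ψ

/-!
Write `xₙ = Tⁿx`. The displacements `d(xₙ, xₙ₊₁)` decrease to `γ`, and right limit normality at `γ`
forces the self-distances `d(xₙ, xₙ)` to be eventually at least `γ`: a smaller one would make the
next displacement smaller than `γ`. From then on the triangle inequality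
`d(x, z) ≤ d(x, y) + d(y, z) - d(y, y)` loses only an arbitrarily small `η` at each point of the
orbit. Fix `m` and let `n` grow: if `d(xₘ, xₙ)` were to reach `s = γ + ε`, then `M(xₘ, xₙ)` would
lie in `[s, s + 2η)`, so that `d(xₘ₊₁, xₙ₊₁)` would stay below `s` by a gap that is independent of
`η`, and the triangle inequality would give `d(xₘ, xₙ) < s`. Hence
`γ ≤ d(xₘ, xₘ) ≤ d(xₘ, xₙ) < γ + ε`.
-/

/-- A partial pseudometric: a partial metric without the axiom that separates points. -/
structure IsPartialPseudometric {X : Type*} (d : X → X → ℝ) : Prop where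
  nonneg : ∀ x y, 0 ≤ d x y
  symm : ∀ x y, d x y = d y x
  self_le_left : ∀ x y, d x x ≤ d x y
  triangle : ∀ x y z, d x z ≤ d x y + d y z - d y y

/-- The part of right limit normality that drives the argument: immediately to the right of every
`s > 0`, `φ` stays below `s` by a positive gap. The gap and the length of the interval can be taken
equal. -/
def HasRightGap (φ : ℝ → ℝ) : Prop :=
  ∀ s, 0 < s → ∃ δ, 0 < δ ∧ ∀ t ∈ Set.Ico s (s + δ), φ t ≤ s - δ

/-- `T` is `(M;c;φ)`-contractive with respect to `d`, where `c(x,y) = max{d(x,x), d(y,y)}`. -/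
def IsMCContractive {X : Type*} (d : X → X → ℝ) (φ : ℝ → ℝ) (T : X → X) : Prop :=
  ∀ x y, d (T x) (T y) ≤ max (φ (Mfun d T x y)) (max (d x x) (d y y))

/-- `x` is moved by `T` only slightly at level `γ`: the self-distances of `x` and `Tx` are at least
`γ`, while `d(x, Tx) < γ + η`. Far enough along an orbit all points have this property. -/
structure IsNearlyFixed {X : Type*} (d : X → X → ℝ) (T : X → X) (γ η : ℝ) (x : X) : Prop where
  le_self : γ ≤ d x x
  le_map_self : γ ≤ d (T x) (T x)
  lt_add : d x (T x) < γ + η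

section Gap

variable {φ : ℝ → ℝ}

theorem HasRightGap.lt_self (hφ : HasRightGap φ) {t : ℝ} (ht : 0 < t) : φ t < t := by
  obtain ⟨δ, hδ, hgap⟩ := hφ t ht
  linarith [hgap t ⟨le_rfl, by linarith⟩]

theorem IsNormal.bddAbove_image_Ico (hφ : IsNormal φ) {s : ℝ} (hs : 0 < s) (r : ℝ) :
    BddAbove (φ '' Set.Ico s r) := by
  refine ⟨r, ?_⟩
  rintro _ ⟨t, ht, rfl⟩
  exact ((hφ.2.2 t (hs.trans_le ht.1)).trans ht.2).le

theorem IsRightLimitNormal.hasRightGap (hφ : IsRightLimitNormal φ) : HasRightGap φ := by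
  intro s hs
  obtain ⟨_, ⟨ε, hε, rfl⟩, hsup⟩ :=
    exists_lt_of_csInf_lt (by exact ⟨_, 1, one_pos, rfl⟩) (hφ.2 s hs)
  set σ := sSup (φ '' Set.Ico s (s + ε))
  refine ⟨min ε (s - σ), lt_min hε (sub_pos.2 hsup), fun t ht => ?_⟩
  have ht_Ico : t ∈ Set.Ico s (s + ε) :=
    ⟨ht.1, ht.2.trans_le (add_le_add_right (min_le_left _ _) s)⟩
  calc φ t ≤ σ := le_csSup (hφ.1.bddAbove_image_Ico hs _) (Set.mem_image_of_mem φ ht_Ico)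
    _ ≤ s - min ε (s - σ) := by linarith [min_le_right ε (s - σ)]

end Gap

section PartialPseudometric

variable {X : Type*} {d : X → X → ℝ} {φ : ℝ → ℝ} {T : X → X} {x y : X} {γ ε η δ s : ℝ}

theorem IsPartialMetric.isPartialPseudometric (hd : IsPartialMetric d) :
    IsPartialPseudometric d :=
  let ⟨nonneg, symm, max_self_le, triangle, _⟩ := hd
  ⟨nonneg, symm, fun x y => (le_max_left _ _).trans (max_self_le x y), triangle⟩

namespace IsPartialPseudometric

theorem self_le_right (hd : IsPartialPseudometric d) (x y : X) : d y y ≤ d x y :=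
  hd.symm y x ▸ hd.self_le_left y x

theorem Mfun_self (hd : IsPartialPseudometric d) (T : X → X) (x : X) :
    Mfun d T x x = d x (T x) := by
  rw [Mfun, hd.symm (T x) x, add_self_div_two, max_self, max_eq_right (hd.self_le_left x (T x)),
    max_self]

theorem Mfun_map_right (hd : IsPartialPseudometric d) (T : X → X) (x : X) :
    Mfun d T x (T x) = max (d x (T x)) (d (T x) (T (T x))) := by
  rw [Mfun, max_eq_right (le_max_left (d x (T x)) _)]
  refine max_eq_left ?_
  linarith [hd.triangle x (T x) (T (T x)), le_max_left (d x (T x)) (d (T x) (T (T x))),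
    le_max_right (d x (T x)) (d (T x) (T (T x)))]

end IsPartialPseudometric

namespace IsMCContractive

theorem map_map_le (hT : IsMCContractive d φ T) (hd : IsPartialPseudometric d)
    (hφ : ∀ t, 0 < t → φ t < t) (x : X) : d (T x) (T (T x)) ≤ d x (T x) := by
  by_contra! hlt
  have hM : Mfun d T x (T x) = d (T x) (T (T x)) := by rw [hd.Mfun_map_right, max_eq_right hlt.le]
  have hcontr := hT x (T x)
  rw [hM] at hcontr
  exact hcontr.not_gt <| max_lt (hφ _ ((hd.nonneg _ _).trans_lt hlt)) <|
    max_lt ((hd.self_le_left _ _).trans_lt hlt) ((hd.self_le_right _ _).trans_lt hlt)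

theorem le_self_of_le_map_map (hT : IsMCContractive d φ T) (hd : IsPartialPseudometric d)
    (hle : d (T x) (T (T x)) ≤ d x (T x)) (hφ : φ (d x (T x)) < s)
    (hs : s ≤ d (T x) (T (T x))) : s ≤ d x x := by
  by_contra! hlt
  have hself : d (T x) (T x) < s := by
    refine (hT x x).trans_lt ?_
    rw [hd.Mfun_self, max_self]
    exact max_lt hφ hlt
  refine hs.not_gt ((hT x (T x)).trans_lt ?_)
  rw [hd.Mfun_map_right, max_eq_left hle]
  exact max_lt hφ (max_lt hlt hself)

theorem antitone_iterate (hT : IsMCContractive d φ T) (hd : IsPartialPseudometric d)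
    (hφ : ∀ t, 0 < t → φ t < t) (x : X) : Antitone fun n => d (T^[n] x) (T^[n + 1] x) := by
  refine antitone_nat_of_succ_le fun n => ?_
  simp only [Function.iterate_succ_apply']
  exact hT.map_map_le hd hφ _

end IsMCContractive

namespace IsNearlyFixed

theorem map_right_lt (hy : IsNearlyFixed d T γ η y) (hd : IsPartialPseudometric d) (x : X) :
    d x (T y) < d x y + η := by
  linarith [hd.triangle x y (T y), hy.le_self, hy.lt_add]

theorem map_left_lt (hx : IsNearlyFixed d T γ η x) (hd : IsPartialPseudometric d) (y : X) :
    d (T x) y < d x y + η := by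
  rw [hd.symm (T x) y, hd.symm x y]
  exact hx.map_right_lt hd y

theorem lt_map_map_add (hx : IsNearlyFixed d T γ η x) (hy : IsNearlyFixed d T γ η y)
    (hd : IsPartialPseudometric d) : d x y < d (T x) (T y) + 2 * η := by
  have hleft : d x y < d (T x) y + η := by
    linarith [hd.triangle x (T x) y, hx.le_map_self, hx.lt_add]
  have hright : d (T x) y < d (T x) (T y) + η := by
    linarith [hd.triangle (T x) (T y) y, hd.symm (T y) y, hy.le_map_self, hy.lt_add]
  linarith

theorem Mfun_lt (hx : IsNearlyFixed d T γ η x) (hy : IsNearlyFixed d T γ η y)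
    (hd : IsPartialPseudometric d) (hxy : γ ≤ d x y) : Mfun d T x y < d x y + η := by
  have hη : 0 < η := by linarith [hx.le_self, hx.lt_add, hd.self_le_left x (T x)]
  refine max_lt (max_lt (by linarith) (max_lt ?_ ?_)) ?_
  · linarith [hx.lt_add]
  · linarith [hy.lt_add]
  · linarith [hx.map_left_lt hd y, hy.map_right_lt hd x]

theorem lt_of_lt_add (hx : IsNearlyFixed d T γ η x) (hy : IsNearlyFixed d T γ η y)
    (hd : IsPartialPseudometric d) (hT : IsMCContractive d φ T)
    (hgap : ∀ t ∈ Set.Ico s (s + δ), φ t ≤ s - δ) (hηδ : 2 * η ≤ δ) (hηs : γ + 3 * η ≤ s)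
    (hxy : d x y < s + η) : d x y < s := by
  by_contra! hle
  have hx_self : d x x < γ + η := (hd.self_le_left x (T x)).trans_lt hx.lt_add
  have hy_self : d y y < γ + η := (hd.self_le_left y (T y)).trans_lt hy.lt_add
  have hM : Mfun d T x y ∈ Set.Ico s (s + δ) :=
    ⟨hle.trans ((le_max_left _ _).trans (le_max_left _ _)),
      by linarith [hx.Mfun_lt hy hd (by linarith)]⟩
  have hmap : d (T x) (T y) ≤ s - 2 * η :=
    (hT x y).trans <| max_le (by linarith [hgap _ hM]) (max_le (by linarith) (by linarith))
  linarith [hx.lt_map_map_add hy hd]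

end IsNearlyFixed

section PicardSequence

theorem eventually_le_self_iterate (hd : IsPartialPseudometric d) (hφ : HasRightGap φ)
    (hT : IsMCContractive d φ T)
    (hγ : Tendsto (fun n => d (T^[n] x) (T^[n + 1] x)) atTop (𝓝 γ)) :
    ∀ᶠ n in atTop, γ ≤ d (T^[n] x) (T^[n] x) := by
  have hge := (hT.antitone_iterate hd (fun _ => hφ.lt_self) x).le_of_tendsto hγ
  obtain hγ_nonpos | hγ_pos := le_or_gt γ 0
  · exact .of_forall fun n => hγ_nonpos.trans (hd.nonneg _ _)
  obtain ⟨δ, hδ, hgap⟩ := hφ γ hγ_pos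
  filter_upwards [hγ.eventually_lt_const (lt_add_of_pos_right γ hδ)] with n hn
  have hφ_lt := hgap _ ⟨hge n, hn⟩
  have hge_succ := hge (n + 1)
  simp only [Function.iterate_succ_apply'] at hφ_lt hge_succ
  exact hT.le_self_of_le_map_map hd (hT.map_map_le hd (fun _ => hφ.lt_self) _) (by linarith)
    hge_succ

theorem eventually_isNearlyFixed_iterate (hd : IsPartialPseudometric d) (hφ : HasRightGap φ)
    (hT : IsMCContractive d φ T)
    (hγ : Tendsto (fun n => d (T^[n] x) (T^[n + 1] x)) atTop (𝓝 γ)) (hη : 0 < η) :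
    ∀ᶠ n in atTop, IsNearlyFixed d T γ η (T^[n] x) := by
  have hself := eventually_le_self_iterate hd hφ hT hγ
  filter_upwards [hself, (tendsto_add_atTop_nat 1).eventually hself,
    hγ.eventually_lt_const (lt_add_of_pos_right γ hη)] with n hn hn_succ hn_lt
  rw [Function.iterate_succ_apply'] at hn_succ hn_lt
  exact ⟨hn, hn_succ, hn_lt⟩

theorem exists_forall_iterate_lt_add (hd : IsPartialPseudometric d) (hφ : HasRightGap φ)
    (hT : IsMCContractive d φ T)
    (hγ : Tendsto (fun n => d (T^[n] x) (T^[n + 1] x)) atTop (𝓝 γ)) (hε : 0 < ε) :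
    ∃ p, ∀ m n, p ≤ m → m ≤ n → d (T^[m] x) (T^[n] x) < γ + ε := by
  have hγ_nonneg : 0 ≤ γ := ge_of_tendsto' hγ fun _ => hd.nonneg _ _
  obtain ⟨δ, hδ, hgap⟩ := hφ (γ + ε) (by linarith)
  obtain ⟨η, hη, hη_lt⟩ := exists_between (lt_min (half_pos hδ) (div_pos hε three_pos))
  obtain ⟨hηδ, hηε⟩ := lt_min_iff.1 hη_lt
  obtain ⟨p, hp⟩ := eventually_atTop.1 (eventually_isNearlyFixed_iterate hd hφ hT hγ hη)
  refine ⟨p, fun m n hm hmn => ?_⟩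
  induction n, hmn using Nat.le_induction with
  | base => linarith [hd.self_le_left (T^[m] x) (T (T^[m] x)), (hp m hm).lt_add]
  | succ n hmn ih =>
    have hstep := (hp n (hm.trans hmn)).map_right_lt hd (T^[m] x)
    rw [← Function.iterate_succ_apply' T n x] at hstep
    exact (hp m hm).lt_of_lt_add (hp (n + 1) (by omega)) hd hT hgap (by linarith) (by linarith)
      (by linarith)

theorem exists_forall_le_self_and_iterate_lt_add (hd : IsPartialPseudometric d)
    (hφ : HasRightGap φ) (hT : IsMCContractive d φ T)
    (hγ : Tendsto (fun n => d (T^[n] x) (T^[n + 1] x)) atTop (𝓝 γ)) (hε : 0 < ε) :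
    ∃ p, ∀ m n, p ≤ m → p ≤ n →
      γ ≤ d (T^[m] x) (T^[m] x) ∧ d (T^[m] x) (T^[n] x) < γ + ε := by
  obtain ⟨p, hp⟩ := eventually_atTop.1 (eventually_le_self_iterate hd hφ hT hγ)
  obtain ⟨q, hq⟩ := exists_forall_iterate_lt_add hd hφ hT hγ hε
  refine ⟨max p q, fun m n hm hn => ⟨hp m (le_of_max_le_left hm), ?_⟩⟩
  obtain hmn | hnm := le_total m n
  · exact hq m n (le_of_max_le_right hm) hmn
  · rw [hd.symm]
    exact hq n m (le_of_max_le_right hn) hnm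

end PicardSequence

end PartialPseudometric

theorem picard_eCauchy_general {X : Type*} {d : X → X → ℝ} (hd : IsPartialPseudometric d)
    {φ : ℝ → ℝ} (hφ : HasRightGap φ) {T : X → X} (hT : IsMCContractive d φ T) {x : X} {γ : ℝ}
    (hγ : Tendsto (fun n => d (T^[n] x) (T^[n + 1] x)) atTop (𝓝 γ)) :
    (∀ α : ℝ, 0 < α → ∃ p : ℕ, ∀ m n : ℕ, p ≤ m → p ≤ n →
        |d (T^[m] x) (T^[n] x) - γ| < α) ∧
    (∀ α : ℝ, 0 < α → ∃ p : ℕ, ∀ m n : ℕ, p ≤ m → p ≤ n →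
        assocE d (T^[m] x) (T^[n] x) < α) := by
  refine ⟨fun α hα => ?_, fun α hα => ?_⟩
  · obtain ⟨p, hp⟩ := exists_forall_le_self_and_iterate_lt_add hd hφ hT hγ hα
    refine ⟨p, fun m n hm hn => abs_lt.2 ⟨?_, ?_⟩⟩ <;>
      linarith [hp m n hm hn, hd.self_le_left (T^[m] x) (T^[n] x)]
  · obtain ⟨p, hp⟩ := exists_forall_le_self_and_iterate_lt_add hd hφ hT hγ (half_pos hα)
    refine ⟨p, fun m n hm hn => ?_⟩
    rw [assocE]
    linarith [hp m n hm hn, hp n m hn hm]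

/-- for `(M;c;φ)`-contractive `T`, with `γ(x) = lim_n d(Tⁿx, Tⁿ⁺¹x)`,
the doubly indexed sequence `d(Tᵐx, Tⁿx)` converges to `γ(x)`; in particular
the Picard sequence is `e`-Cauchy. -/
theorem picard_eCauchy {X : Type*} [Nonempty X] (d : X → X → ℝ)
    (hd : IsPartialMetric d) (hcomp : eComplete d)
    (φ : ℝ → ℝ) (hφ : IsRightLimitNormal φ) (T : X → X)
    (hT : ∀ x y : X, d (T x) (T y) ≤ max (φ (Mfun d T x y)) (max (d x x) (d y y)))
    (x : X) (γ : ℝ)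
    (hγ : Tendsto (fun n => d (T^[n] x) (T^[n + 1] x)) atTop (nhds γ)) :
    (∀ α : ℝ, 0 < α → ∃ p : ℕ, ∀ m n : ℕ, p ≤ m → p ≤ n →
        |d (T^[m] x) (T^[n] x) - γ| < α) ∧
    (∀ α : ℝ, 0 < α → ∃ p : ℕ, ∀ m n : ℕ, p ≤ m → p ≤ n →
        assocE d (T^[m] x) (T^[n] x) < α) :=
  picard_eCauchy_general hd.isPartialPseudometric hφ.hasRightGap hT hγ
end
end

section
/- Let d be a partial metric on a nonempty set X whose associated metric space (X,e) is complete, let φ : [0,∞) → [0,∞) be limit normal with ψ(t) := t − φ(t) semi-coercive, and let T : X → X be (M;b;φ)-contractive, i.e., d(Tx,Ty) ≤ max{φ(M(x,y)), b(x,y)} for all x, y ∈ X. Set θ := inf{d(z,z) : z ∈ X, d(z,Tz) = d(z,z)}. Then for every ε > 0 there exists z ∈ X with d(z,Tz) = d(z,z), d(z,z) < θ + ε, and d(z,z) − d(Tz,Tz) < 2ε. -/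
open Filter Topology

noncomputable section

/-!
Two facts drive the proof. First, `d` is continuous for `e`: moving an argument of `d` by an
`e`-distance `α` changes its value by at most `α`. Second, if `M (uᵢ, vᵢ)` tends to `r` from the
right and `d (T uᵢ, T vᵢ)` tends to `r`, then the lower limit of `b (uᵢ, vᵢ)` is at least `r`: for
`r > 0`, the values `φ (M (uᵢ, vᵢ))` eventually stay below some `c < r`, so the contraction bound
is realised by `b (uᵢ, vᵢ)`; for `r = 0` it holds because `b` is nonnegative.

Along an orbit, `d (xₙ, xₙ₊₁)` decreases to some `s`, and the second fact with
`(uₙ, vₙ) = (xₙ, xₙ₊₁)` gives `e (xₙ, xₙ₊₁) → 0` and `d (xₙ, xₙ) → s`. If the orbit were not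
`e`-Cauchy, choosing the first crossings of a level `r > s` would give `d (uᵢ, vᵢ) → r` from the
right along orbit points, hence `r ≤ s`. The `e`-limit `z` of the orbit is `d`-fixed by the same
argument applied to `(xₙ, z)`, and `d (z, z) = s ≤ d (x₀, x₁)`.

Finally, let `zₙ` be `d`-fixed with `d (zₙ, zₙ) → θ`. The orbit of `T zₙ` ends in a `d`-fixed point
of self-distance at least `θ`, so `d (T zₙ, T² zₙ) ≥ θ`, and the second fact for `(zₙ, T zₙ)` gives
`d (zₙ, zₙ) - d (T zₙ, T zₙ) = e (zₙ, T zₙ) → 0`.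
-/

/-- A `d`-fixed point of `T`: the image `T z` is as close to `z` as `z` is to itself. In a partial
metric space this is weaker than `T z = z`. -/
def IsDFixedPt {X : Type*} (d : X → X → ℝ) (T : X → X) (z : X) : Prop :=
  d z (T z) = d z z

/-- `T` is `(M; b; φ)`-contractive, where `M` is `Mfun d T` and the average self-distance
`b x y` is written out. -/
def IsContractive {X : Type*} (d : X → X → ℝ) (φ : ℝ → ℝ) (T : X → X) : Prop :=
  ∀ x y, d (T x) (T y) ≤ max (φ (Mfun d T x y)) ((d x x + d y y) / 2)

section

variable {φ : ℝ → ℝ}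

namespace IsNormal

theorem le_self (hφ : IsNormal φ) {t : ℝ} (ht : 0 ≤ t) : φ t ≤ t := by
  obtain rfl | ht := ht.eq_or_lt
  · exact hφ.2.1.le
  · exact (hφ.2.2 t ht).le

theorem bddAbove_image (hφ : IsNormal φ) {S : Set ℝ} (hS : BddAbove S) (hS₀ : S ⊆ Set.Ici 0) :
    BddAbove (φ '' S) := by
  obtain ⟨B, hB⟩ := hS
  exact ⟨B, Set.forall_mem_image.2 fun t ht => (hφ.le_self (hS₀ ht)).trans (hB ht)⟩

end IsNormal

theorem IsLimitNormal.isRightLimitNormal (hφ : IsLimitNormal φ) : IsRightLimitNormal φ := by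
  refine ⟨hφ.1, fun s hs => ?_⟩
  obtain ⟨_, ⟨ε, hε, rfl⟩, hlt⟩ :=
    exists_lt_of_csInf_lt (by exact ⟨_, 1, one_pos, rfl⟩) (hφ.2 s hs)
  have hbelow : BddBelow {y : ℝ | ∃ ε : ℝ, 0 < ε ∧ y = sSup (φ '' Set.Ico s (s + ε))} := by
    refine ⟨0, ?_⟩
    rintro _ ⟨ε, -, rfl⟩
    exact Real.sSup_nonneg (Set.forall_mem_image.2 fun t ht => hφ.1.1 t (hs.le.trans ht.1))
  have habove : BddAbove (φ '' (Set.Ioo (s - ε) (s + ε) ∩ Set.Ici 0)) :=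
    hφ.1.bddAbove_image (bddAbove_Ioo.mono Set.inter_subset_left) Set.inter_subset_right
  have hsub : Set.Ico s (s + ε) ⊆ Set.Ioo (s - ε) (s + ε) ∩ Set.Ici 0 :=
    fun t ht => ⟨⟨(sub_lt_self s hε).trans_le ht.1, ht.2⟩, hs.le.trans ht.1⟩
  calc rightLimsup φ s
      ≤ sSup (φ '' Set.Ico s (s + ε)) := csInf_le hbelow ⟨ε, hε, rfl⟩
    _ ≤ sSup (φ '' (Set.Ioo (s - ε) (s + ε) ∩ Set.Ici 0)) :=
        csSup_le_csSup habove ((Set.nonempty_Ico.2 (lt_add_of_pos_right s hε)).image φ)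
          (Set.image_mono hsub)
    _ < s := hlt

theorem IsRightLimitNormal.exists_lt_eventually_le (hφ : IsRightLimitNormal φ) {s : ℝ}
    (hs : 0 < s) : ∃ c < s, ∀ᶠ t in 𝓝[≥] s, φ t ≤ c := by
  obtain ⟨_, ⟨ε, hε, rfl⟩, hlt⟩ :=
    exists_lt_of_csInf_lt (by exact ⟨_, 1, one_pos, rfl⟩) (hφ.2 s hs)
  refine ⟨_, hlt, ?_⟩
  filter_upwards [Ico_mem_nhdsGE (lt_add_of_pos_right s hε)] with t ht
  exact le_csSup (hφ.1.bddAbove_image bddAbove_Ico fun _ h => hs.le.trans h.1)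
    (Set.mem_image_of_mem φ ht)

theorem exists_lt_and_le_succ {α : Type*} [LinearOrder α] {f : ℕ → ℕ → α} {r : α}
    (hdiag : ∀ᶠ n in atTop, f n n < r) (hfar : ∀ p, ∃ m n, p ≤ m ∧ m ≤ n ∧ r ≤ f m n) (p : ℕ) :
    ∃ m n, p ≤ m ∧ m ≤ n ∧ f m n < r ∧ r ≤ f m (n + 1) := by
  obtain ⟨N, hN⟩ := eventually_atTop.1 hdiag
  obtain ⟨m, n, hm, hmn, hmn_far⟩ := hfar (max p N)
  obtain ⟨k, hk, hk_succ⟩ := Nat.exists_not_and_succ_of_not_zero_of_exists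
    (p := fun k => r ≤ f m (m + k)) (hN m (le_of_max_le_right hm)).not_ge
    ⟨n - m, by rwa [Nat.add_sub_cancel' hmn]⟩
  exact ⟨m, m + k, le_of_max_le_left hm, Nat.le_add_right m k, not_le.1 hk, hk_succ⟩

variable {X ι : Type*} {d : X → X → ℝ} {T : X → X} {l : Filter ι}

theorem assocE_self (d : X → X → ℝ) (x : X) : assocE d x x = 0 := by
  unfold assocE
  ring

theorem le_Mfun (d : X → X → ℝ) (T : X → X) (x y : X) : d x y ≤ Mfun d T x y :=
  (le_max_left _ _).trans (le_max_left _ _)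

theorem apply_right_le_Mfun (d : X → X → ℝ) (T : X → X) (x y : X) : d y (T y) ≤ Mfun d T x y :=
  ((le_max_right _ _).trans (le_max_right _ _)).trans (le_max_left _ _)

theorem Mfun_le {x y : X} {r : ℝ} (hxy : d x y ≤ r) (hx : d x (T x) ≤ r) (hy : d y (T y) ≤ r)
    (hcross : d x (T y) + d (T x) y ≤ 2 * r) : Mfun d T x y ≤ r :=
  max_le (max_le hxy (max_le hx hy)) (by linarith)

namespace IsPartialMetric

theorem nonneg (hd : IsPartialMetric d) (x y : X) : 0 ≤ d x y :=
  hd.1 x y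

theorem comm (hd : IsPartialMetric d) (x y : X) : d x y = d y x :=
  hd.2.1 x y

theorem self_le_left (hd : IsPartialMetric d) (x y : X) : d x x ≤ d x y :=
  (le_max_left _ _).trans (hd.2.2.1 x y)

theorem self_le_right (hd : IsPartialMetric d) (x y : X) : d y y ≤ d x y :=
  (le_max_right _ _).trans (hd.2.2.1 x y)

theorem triangle (hd : IsPartialMetric d) (x y z : X) : d x z ≤ d x y + d y z - d y y :=
  hd.2.2.2.1 x y z

theorem assocE_comm (hd : IsPartialMetric d) (x y : X) : assocE d x y = assocE d y x := by
  unfold assocE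
  linarith [hd.comm x y]

theorem assocE_nonneg (hd : IsPartialMetric d) (x y : X) : 0 ≤ assocE d x y := by
  unfold assocE
  linarith [hd.self_le_left x y, hd.self_le_right x y]

theorem le_add_assocE (hd : IsPartialMetric d) (x y z : X) : d x z ≤ d x y + assocE d y z := by
  unfold assocE
  linarith [hd.triangle x y z, hd.self_le_right y z]

theorem le_assocE_add (hd : IsPartialMetric d) (x y z : X) : d x z ≤ assocE d y x + d y z := by
  unfold assocE
  linarith [hd.triangle x y z, hd.self_le_right y x, hd.comm x y]

theorem le_self_add_assocE (hd : IsPartialMetric d) (x y : X) : d x y ≤ d x x + assocE d x y :=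
  hd.le_add_assocE x x y

theorem tendsto_of_assocE (hd : IsPartialMetric d) {a b a' b' : ι → X} {r : ℝ}
    (hab : Tendsto (fun i => d (a i) (b i)) l (𝓝 r))
    (ha : Tendsto (fun i => assocE d (a i) (a' i)) l (𝓝 0))
    (hb : Tendsto (fun i => assocE d (b i) (b' i)) l (𝓝 0)) :
    Tendsto (fun i => d (a' i) (b' i)) l (𝓝 r) := by
  have hlower : Tendsto (fun i => d (a i) (b i) - (assocE d (a i) (a' i) + assocE d (b i) (b' i)))
      l (𝓝 r) := by simpa using hab.sub (ha.add hb)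
  have hupper : Tendsto (fun i => d (a i) (b i) + (assocE d (a i) (a' i) + assocE d (b i) (b' i)))
      l (𝓝 r) := by simpa using hab.add (ha.add hb)
  refine tendsto_of_tendsto_of_tendsto_of_le_of_le hlower hupper (fun i => ?_) (fun i => ?_)
  · dsimp only
    linarith [hd.le_assocE_add (a i) (a' i) (b i), hd.le_add_assocE (a' i) (b' i) (b i),
      hd.assocE_comm (a i) (a' i), hd.assocE_comm (b i) (b' i)]
  · dsimp only
    linarith [hd.le_assocE_add (a' i) (a i) (b' i), hd.le_add_assocE (a i) (b i) (b' i)]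

theorem exists_subseq_tendsto_nhdsGE (hd : IsPartialMetric d) {u : ℕ → X} {r : ℝ}
    (hself : ∀ᶠ n in atTop, d (u n) (u n) < r)
    (hstep : Tendsto (fun n => assocE d (u n) (u (n + 1))) atTop (𝓝 0))
    (hfar : ∀ p, ∃ m n, p ≤ m ∧ m ≤ n ∧ r ≤ d (u m) (u n)) :
    ∃ m n : ℕ → ℕ, Tendsto m atTop atTop ∧ Tendsto n atTop atTop ∧
      Tendsto (fun p => d (u (m p)) (u (n p))) atTop (𝓝[≥] r) := by
  choose m n hm hmn hlt hge using
    exists_lt_and_le_succ (f := fun m n => d (u m) (u n)) hself hfar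
  have hm_top : Tendsto m atTop atTop := tendsto_atTop_mono hm tendsto_id
  have hn_top : Tendsto n atTop atTop := tendsto_atTop_mono hmn hm_top
  refine ⟨m, fun p => n p + 1, hm_top, (tendsto_add_atTop_nat 1).comp hn_top,
    tendsto_nhdsWithin_iff.2 ⟨?_, .of_forall hge⟩⟩
  have hupper : Tendsto (fun p => r + assocE d (u (n p)) (u (n p + 1))) atTop (𝓝 r) := by
    simpa using (hstep.comp hn_top).const_add r
  refine tendsto_of_tendsto_of_tendsto_of_le_of_le tendsto_const_nhds hupper hge fun p => ?_
  exact (hd.le_add_assocE _ (u (n p)) _).trans (by gcongr; exact (hlt p).le)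

theorem cauchy_assocE (hd : IsPartialMetric d) {u : ℕ → X} {s : ℝ}
    (hself : Tendsto (fun n => d (u n) (u n)) atTop (𝓝 s))
    (hclose : ∀ r > s, ∃ p, ∀ m n, p ≤ m → m ≤ n → d (u m) (u n) < r) (α : ℝ) (hα : 0 < α) :
    ∃ p, ∀ m n, p ≤ m → p ≤ n → assocE d (u m) (u n) < α := by
  obtain ⟨p, hp⟩ := hclose (s + α / 4) (by linarith)
  obtain ⟨N, hN⟩ := eventually_atTop.1
    (hself.eventually_const_lt (show s - α / 4 < s by linarith))
  have hordered : ∀ m n, max p N ≤ m → m ≤ n → assocE d (u m) (u n) < α := by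
    intro m n hm hmn
    have hm_self := hN m (le_of_max_le_right hm)
    have hn_self := hN n ((le_of_max_le_right hm).trans hmn)
    have hmn_dist := hp m n (le_of_max_le_left hm) hmn
    unfold assocE
    linarith
  refine ⟨max p N, fun m n hm hn => ?_⟩
  obtain hmn | hnm := le_total m n
  · exact hordered m n hm hmn
  · exact hd.assocE_comm (u n) (u m) ▸ hordered n m hn hnm

theorem Mfun_apply_right_eq_max (hd : IsPartialMetric d) (T : X → X) (x : X) :
    Mfun d T x (T x) = max (d x (T x)) (d (T x) (T (T x))) := by
  have hx := le_max_left (d x (T x)) (d (T x) (T (T x)))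
  have hTx := le_max_right (d x (T x)) (d (T x) (T (T x)))
  exact le_antisymm (Mfun_le hx hx hTx (by linarith [hd.triangle x (T x) (T (T x))]))
    (max_le (le_Mfun d T x (T x)) (apply_right_le_Mfun d T x (T x)))

theorem Mfun_le_add_assocE (hd : IsPartialMetric d) (T : X → X) (x y : X) :
    Mfun d T x y ≤ d x y + (assocE d x (T x) + assocE d y (T y)) := by
  have hx := hd.assocE_nonneg x (T x)
  have hy := hd.assocE_nonneg y (T y)
  apply Mfun_le
  · linarith
  · linarith [hd.le_self_add_assocE x (T x), hd.self_le_left x y]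
  · linarith [hd.le_self_add_assocE y (T y), hd.self_le_right x y]
  · linarith [hd.le_add_assocE x y (T y), hd.le_assocE_add (T x) x y]

theorem Mfun_le_apply_right_add_assocE (hd : IsPartialMetric d) (T : X → X) (x z : X) :
    Mfun d T x z ≤ d z (T z) + (assocE d z x + assocE d x (T x)) := by
  have hx := hd.assocE_nonneg x (T x)
  have hzx := hd.assocE_nonneg z x
  have hxz : d x z ≤ d z (T z) + assocE d z x := by
    linarith [hd.le_assocE_add x z z, hd.self_le_left z (T z)]
  apply Mfun_le
  · linarith
  · linarith [hd.le_self_add_assocE x (T x), hd.self_le_left x z]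
  · linarith
  · linarith [hd.le_assocE_add x z (T z), hd.le_assocE_add (T x) x z]

end IsPartialMetric

namespace IsContractive

theorem dist_apply_le (hT : IsContractive d φ T) (hd : IsPartialMetric d) (hφ : IsNormal φ)
    (x : X) : d (T x) (T (T x)) ≤ d x (T x) := by
  by_contra! hlt
  have hM : Mfun d T x (T x) = d (T x) (T (T x)) :=
    (hd.Mfun_apply_right_eq_max T x).trans (max_eq_right hlt.le)
  rcases le_max_iff.1 (hM ▸ hT x (T x)) with hle | hle
  · exact hle.not_gt (hφ.2.2 _ ((hd.nonneg _ _).trans_lt hlt))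
  · linarith [hd.self_le_left x (T x), hd.self_le_right x (T x)]

theorem Mfun_apply_right (hT : IsContractive d φ T) (hd : IsPartialMetric d) (hφ : IsNormal φ)
    (x : X) : Mfun d T x (T x) = d x (T x) :=
  (hd.Mfun_apply_right_eq_max T x).trans (max_eq_left (hT.dist_apply_le hd hφ x))

theorem eventually_lt_avg_self (hT : IsContractive d φ T) (hd : IsPartialMetric d)
    (hφ : IsRightLimitNormal φ) {u v : ι → X} {r c : ℝ}
    (hM : Tendsto (fun i => Mfun d T (u i) (v i)) l (𝓝[≥] r))
    (himage : Tendsto (fun i => d (T (u i)) (T (v i))) l (𝓝 r)) (hc : c < r) :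
    ∀ᶠ i in l, c < (d (u i) (u i) + d (v i) (v i)) / 2 := by
  obtain hr | hr := le_or_gt r 0
  · exact .of_forall fun i => by linarith [hd.nonneg (u i) (u i), hd.nonneg (v i) (v i)]
  · obtain ⟨c', hc', hφc'⟩ := hφ.exists_lt_eventually_le hr
    filter_upwards [hM.eventually hφc', himage.eventually_const_lt hc,
      himage.eventually_const_lt hc'] with i hφi hci hc'i
    rcases le_max_iff.1 (hT (u i) (v i)) with hle | hle <;> linarith

theorem le_of_tendsto_avg_self [l.NeBot] (hT : IsContractive d φ T) (hd : IsPartialMetric d)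
    (hφ : IsRightLimitNormal φ) {u v : ι → X} {r s t : ℝ}
    (hM : Tendsto (fun i => Mfun d T (u i) (v i)) l (𝓝[≥] r))
    (himage : Tendsto (fun i => d (T (u i)) (T (v i))) l (𝓝 r))
    (hu : Tendsto (fun i => d (u i) (u i)) l (𝓝 s))
    (hv : Tendsto (fun i => d (v i) (v i)) l (𝓝 t)) : r ≤ (s + t) / 2 :=
  le_of_forall_lt_imp_le_of_dense fun _ hc => ge_of_tendsto ((hu.add hv).div_const 2)
    ((hT.eventually_lt_avg_self hd hφ hM himage hc).mono fun _ => le_of_lt)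

theorem tendsto_assocE_apply (hT : IsContractive d φ T) (hd : IsPartialMetric d)
    (hφ : IsRightLimitNormal φ) {u : ι → X} {s : ℝ}
    (hu : Tendsto (fun i => d (u i) (T (u i))) l (𝓝 s))
    (hs : ∀ i, s ≤ d (T (u i)) (T (T (u i)))) :
    Tendsto (fun i => assocE d (u i) (T (u i))) l (𝓝 0) := by
  have hle := fun i => hT.dist_apply_le hd hφ.1 (u i)
  have hM : Tendsto (fun i => Mfun d T (u i) (T (u i))) l (𝓝[≥] s) := by
    simp only [hT.Mfun_apply_right hd hφ.1]
    exact tendsto_nhdsWithin_iff.2 ⟨hu, .of_forall fun i => (hs i).trans (hle i)⟩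
  have himage : Tendsto (fun i => d (T (u i)) (T (T (u i)))) l (𝓝 s) :=
    tendsto_of_tendsto_of_tendsto_of_le_of_le tendsto_const_nhds hu hs hle
  have havg : Tendsto (fun i => (d (u i) (u i) + d (T (u i)) (T (u i))) / 2) l (𝓝 s) := by
    refine tendsto_order.2 ⟨fun c hc => hT.eventually_lt_avg_self hd hφ hM himage hc,
      fun c hc => (hu.eventually_lt_const hc).mono fun i hi => ?_⟩
    linarith [hd.self_le_left (u i) (T (u i)), hd.self_le_right (u i) (T (u i))]
  have hdiff := (hu.sub havg).const_mul 2
  rw [sub_self, mul_zero] at hdiff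
  exact hdiff.congr fun i => by unfold assocE; ring

theorem isDFixedPt_of_tendsto [l.NeBot] (hT : IsContractive d φ T) (hd : IsPartialMetric d)
    (hφ : IsRightLimitNormal φ) {u : ι → X} {z : X}
    (hu : Tendsto (fun i => assocE d (u i) (T (u i))) l (𝓝 0))
    (hz : Tendsto (fun i => assocE d z (u i)) l (𝓝 0)) : IsDFixedPt d T z := by
  have hconst (y : X) : Tendsto (fun _ : ι => assocE d y y) l (𝓝 0) := by
    simp only [assocE_self, tendsto_const_nhds]
  have hM : Tendsto (fun i => Mfun d T (u i) z) l (𝓝[≥] d z (T z)) := by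
    have hge := fun i => apply_right_le_Mfun d T (u i) z
    refine tendsto_nhdsWithin_iff.2 ⟨?_, .of_forall hge⟩
    refine tendsto_of_tendsto_of_tendsto_of_le_of_le tendsto_const_nhds ?_ hge
      fun i => hd.Mfun_le_apply_right_add_assocE T (u i) z
    simpa using (hz.add hu).const_add (d z (T z))
  have himage : Tendsto (fun i => d (T (u i)) (T z)) l (𝓝 (d z (T z))) :=
    hd.tendsto_of_assocE (hd.tendsto_of_assocE tendsto_const_nhds hz (hconst (T z))) hu
      (hconst (T z))
  have hself : Tendsto (fun i => d (u i) (u i)) l (𝓝 (d z z)) :=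
    hd.tendsto_of_assocE tendsto_const_nhds hz hz
  have hle : d z (T z) ≤ (d z z + d z z) / 2 :=
    hT.le_of_tendsto_avg_self hd hφ hM himage hself tendsto_const_nhds
  exact le_antisymm (hle.trans_eq (add_self_div_two _)) (hd.self_le_left z (T z))

theorem le_of_tendsto_of_assocE_apply [l.NeBot] (hT : IsContractive d φ T)
    (hd : IsPartialMetric d) (hφ : IsRightLimitNormal φ) {u v : ι → X} {r s t : ℝ}
    (huv : Tendsto (fun i => d (u i) (v i)) l (𝓝[≥] r))
    (hu : Tendsto (fun i => assocE d (u i) (T (u i))) l (𝓝 0))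
    (hv : Tendsto (fun i => assocE d (v i) (T (v i))) l (𝓝 0))
    (hu_self : Tendsto (fun i => d (u i) (u i)) l (𝓝 s))
    (hv_self : Tendsto (fun i => d (v i) (v i)) l (𝓝 t)) : r ≤ (s + t) / 2 := by
  obtain ⟨huv, hge⟩ := tendsto_nhdsWithin_iff.1 huv
  have hM : Tendsto (fun i => Mfun d T (u i) (v i)) l (𝓝[≥] r) := by
    refine tendsto_nhdsWithin_iff.2 ⟨?_, hge.mono fun i hi => le_trans hi (le_Mfun d T _ _)⟩
    refine tendsto_of_tendsto_of_tendsto_of_le_of_le huv ?_ (fun i => le_Mfun d T _ _)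
      fun i => hd.Mfun_le_add_assocE T (u i) (v i)
    simpa using huv.add (hu.add hv)
  exact hT.le_of_tendsto_avg_self hd hφ hM (hd.tendsto_of_assocE huv hu hv) hu_self hv_self

theorem exists_forall_dist_iterate_lt (hT : IsContractive d φ T) (hd : IsPartialMetric d)
    (hφ : IsRightLimitNormal φ) {x : X} {r s : ℝ} (hr : s < r)
    (hstep : Tendsto (fun n => assocE d (T^[n] x) (T (T^[n] x))) atTop (𝓝 0))
    (hself : Tendsto (fun n => d (T^[n] x) (T^[n] x)) atTop (𝓝 s)) :
    ∃ p, ∀ m n, p ≤ m → m ≤ n → d (T^[m] x) (T^[n] x) < r := by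
  by_contra! hfar
  obtain ⟨m, n, hm, hn, hmn⟩ := hd.exists_subseq_tendsto_nhdsGE (u := fun n => T^[n] x)
    (hself.eventually_lt_const hr) (by simpa only [Function.iterate_succ_apply'] using hstep) hfar
  have hle : r ≤ (s + s) / 2 := hT.le_of_tendsto_of_assocE_apply hd hφ hmn (hstep.comp hm)
    (hstep.comp hn) (hself.comp hm) (hself.comp hn)
  linarith

theorem exists_tendsto_dist_iterate (hT : IsContractive d φ T) (hd : IsPartialMetric d)
    (hφ : IsNormal φ) (x : X) :
    ∃ s, Tendsto (fun n => d (T^[n] x) (T (T^[n] x))) atTop (𝓝 s) ∧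
      ∀ n, s ≤ d (T^[n] x) (T (T^[n] x)) := by
  have hanti : Antitone fun n => d (T^[n] x) (T (T^[n] x)) := antitone_nat_of_succ_le fun n => by
    simpa only [Function.iterate_succ_apply'] using hT.dist_apply_le hd hφ (T^[n] x)
  have hbdd : BddBelow (Set.range fun n => d (T^[n] x) (T (T^[n] x))) :=
    ⟨0, Set.forall_mem_range.2 fun n => hd.nonneg _ _⟩
  exact ⟨_, tendsto_atTop_ciInf hanti hbdd, ciInf_le hbdd⟩

theorem exists_isDFixedPt_le (hT : IsContractive d φ T) (hd : IsPartialMetric d)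
    (hcomp : eComplete d) (hφ : IsRightLimitNormal φ) (x : X) :
    ∃ z, IsDFixedPt d T z ∧ d z z ≤ d x (T x) := by
  obtain ⟨s, hs, hs_le⟩ := hT.exists_tendsto_dist_iterate hd hφ.1 x
  have hstep : Tendsto (fun n => assocE d (T^[n] x) (T (T^[n] x))) atTop (𝓝 0) :=
    hT.tendsto_assocE_apply hd hφ hs fun n => by
      simpa only [Function.iterate_succ_apply'] using hs_le (n + 1)
  have hself : Tendsto (fun n => d (T^[n] x) (T^[n] x)) atTop (𝓝 s) := by
    refine tendsto_of_tendsto_of_tendsto_of_le_of_le (by simpa using hs.sub hstep) hs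
      (fun n => ?_) fun n => hd.self_le_left _ _
    exact sub_le_iff_le_add.2 (hd.le_self_add_assocE _ _)
  obtain ⟨z, hz⟩ := hcomp (fun n => T^[n] x) (hd.cauchy_assocE hself fun r hr =>
    hT.exists_forall_dist_iterate_lt hd hφ hr hstep hself)
  simp only [hd.assocE_comm _ z] at hz
  have hzs : d z z = s :=
    tendsto_nhds_unique (hd.tendsto_of_assocE tendsto_const_nhds hz hz) hself
  exact ⟨z, hT.isDFixedPt_of_tendsto hd hφ hstep hz, hzs.trans_le (hs_le 0)⟩

end IsContractive

end

theorem dFixed_approx_min_general {X : Type*} [Nonempty X] (d : X → X → ℝ)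
    (hd : IsPartialMetric d) (hcomp : eComplete d)
    (φ : ℝ → ℝ) (hφ : IsRightLimitNormal φ) (T : X → X) (hT : IsContractive d φ T)
    (θ : ℝ) (hθ : θ = sInf {r : ℝ | ∃ z : X, d z (T z) = d z z ∧ r = d z z}) :
    ∀ ε : ℝ, 0 < ε → ∃ z : X,
      d z (T z) = d z z ∧ d z z < θ + ε ∧ d z z - d (T z) (T z) < 2 * ε := by
  intro ε hε
  set S := {r : ℝ | ∃ z : X, d z (T z) = d z z ∧ r = d z z}
  have hne : S.Nonempty :=
    let ⟨z, hz, _⟩ := hT.exists_isDFixedPt_le hd hcomp hφ (Classical.arbitrary X)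
    ⟨d z z, z, hz, rfl⟩
  have hbdd : BddBelow S := ⟨0, by rintro _ ⟨z, -, rfl⟩; exact hd.nonneg z z⟩
  obtain ⟨r, -, hr, hrS⟩ := exists_seq_tendsto_sInf hne hbdd
  choose z hz hrz using hrS
  rw [← hθ, funext hrz] at hr
  have hθ_le (n : ℕ) : θ ≤ d (T (z n)) (T (T (z n))) := by
    obtain ⟨w, hw, hw_le⟩ := hT.exists_isDFixedPt_le hd hcomp hφ (T (z n))
    exact hθ.trans_le ((csInf_le hbdd ⟨w, hw, rfl⟩).trans hw_le)
  have hdrop : Tendsto (fun n => assocE d (z n) (T (z n))) atTop (𝓝 0) :=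
    hT.tendsto_assocE_apply hd hφ (by simpa only [hz] using hr) hθ_le
  obtain ⟨n, hn, hn_drop⟩ := ((hr.eventually_lt_const (lt_add_of_pos_right θ hε)).and
    (hdrop.eventually_lt_const (show 0 < 2 * ε by positivity))).exists
  refine ⟨z n, hz n, hn, ?_⟩
  unfold assocE at hn_drop
  linarith [hz n]

/-- almost-minimizing `d`-fixed points with small self-distance drop. -/
theorem dFixed_approx_min {X : Type*} [Nonempty X] (d : X → X → ℝ)
    (hd : IsPartialMetric d) (hcomp : eComplete d)
    (φ : ℝ → ℝ) (hφ : IsLimitNormal φ) (hψ : SemiCoercive (fun t => t - φ t))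
    (T : X → X)
    (hT : ∀ x y : X, d (T x) (T y) ≤
      max (φ (Mfun d T x y)) ((d x x + d y y) / 2))
    (θ : ℝ) (hθ : θ = sInf {r : ℝ | ∃ z : X, d z (T z) = d z z ∧ r = d z z}) :
    ∀ ε : ℝ, 0 < ε → ∃ z : X,
      d z (T z) = d z z ∧ d z z < θ + ε ∧ d z z - d (T z) (T z) < 2 * ε :=
  dFixed_approx_min_general d hd hcomp φ hφ.isRightLimitNormal T hT θ hθ
end
end
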